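/- Let n₁, n₂ ∈ ℕ and let κ : Σ × (ℝ^{n} \ {0}) → ℂ be a function (n = n₁ + n₂) such that there exists C > 0 with |∂_ζ^γ κ(λ, ζ)| · |ζ|^{|γ|} ≤ C for all λ ∈ Σ, ζ ∈ ℝⁿ \ {0} and all multi-indices γ ≤ (1,…,1), where κ(λ, ·) is C¹ in each coordinate. Then for every multi-index γ = (γ₁, γ₂) with γ₂ ≠ 0, every ξ ∈ ℝ^{n₁} \ {0}, and every k ∈ ℤ^{n₂} with |k_j| ≥ 2 in each coordinate where γ₂ is nonzero, the discrete-continuous mixed difference satisfies |ξ^{γ₁} k^{γ₂} ∂_ξ^{γ₁} Δ_k^{γ₂} κ(λ,(ξ,k))| ≤ C' for a constant C' depending only on C and n, where Δ_k^{e_j} M(k) = M(k) − M(k − e_j) denotes the backward partial difference in the j-th discrete coordinate. -/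

import Mathlib

open scoped BigOperators

/-- Partial derivative of `f : ℝⁿ → ℂ` in the `j`-th coordinate. -/
noncomputable def pderivCoord {n : ℕ} (j : Fin n) (f : (Fin n → ℝ) → ℂ) :
    (Fin n → ℝ) → ℂ :=
  fun x => deriv (fun t => f (Function.update x j t)) (x j)

/-- Iterated partial derivative `∂^γ` for a multi-index `γ ≤ (1,…,1)`. -/
noncomputable def mpderiv {n : ℕ} (γ : Fin n → ℕ) (f : (Fin n → ℝ) → ℂ) :
    (Fin n → ℝ) → ℂ :=
  (List.finRange n).foldr (fun j g => if γ j = 1 then pderivCoord j g else g) f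

/-- Backward partial difference `Δ^{e_j} M (k) = M(k) - M(k - e_j)`. -/
def ddiffCoord {m : ℕ} (j : Fin m) (M : (Fin m → ℤ) → ℂ) : (Fin m → ℤ) → ℂ :=
  fun k => M k - M (Function.update k j (k j - 1))

/-- Iterated partial difference `Δ^γ` for a multi-index `γ ≤ (1,…,1)`. -/
def mddiff {m : ℕ} (γ : Fin m → ℕ) (M : (Fin m → ℤ) → ℂ) : (Fin m → ℤ) → ℂ :=
  (List.finRange m).foldr (fun j g => if γ j = 1 then ddiffCoord j g else g) M

/-- Iterated partial derivative along a list of coordinates. -/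
noncomputable def PD {N : ℕ} (L : List (Fin N)) (f : (Fin N → ℝ) → ℂ) : (Fin N → ℝ) → ℂ :=
  L.foldr pderivCoord f

/-- Two-point difference in one coordinate. -/
def DD {N : ℕ} (τ : Fin N × ℝ × ℝ) (f : (Fin N → ℝ) → ℂ) : (Fin N → ℝ) → ℂ :=
  fun x => f (Function.update x τ.1 τ.2.2) - f (Function.update x τ.1 τ.2.1)

/-- Iterated two-point differences. -/
def DL {N : ℕ} (T : List (Fin N × ℝ × ℝ)) (f : (Fin N → ℝ) → ℂ) : (Fin N → ℝ) → ℂ :=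
  T.foldr DD f

/-- Product of side lengths. -/
def sideProd {N : ℕ} (T : List (Fin N × ℝ × ℝ)) : ℝ :=
  (T.map (fun τ => |τ.2.2 - τ.2.1|)).prod

lemma DL_append {N : ℕ} (T T' : List (Fin N × ℝ × ℝ)) (f : (Fin N → ℝ) → ℂ) :
    DL (T ++ T') f = DL T (DL T' f) := by
  simp [DL, List.foldr_append]

lemma DD_comm {N : ℕ} (σ τ : Fin N × ℝ × ℝ) (h : σ.1 ≠ τ.1) (f : (Fin N → ℝ) → ℂ) :
    DD σ (DD τ f) = DD τ (DD σ f) := by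
  funext x
  simp only [DD]
  rw [Function.update_comm h, Function.update_comm h, Function.update_comm h,
    Function.update_comm h]
  ring

lemma DL_DD_comm {N : ℕ} (T : List (Fin N × ℝ × ℝ)) (τ : Fin N × ℝ × ℝ)
    (h : τ.1 ∉ T.map Prod.fst) (f : (Fin N → ℝ) → ℂ) :
    DL T (DD τ f) = DD τ (DL T f) := by
  induction T with
  | nil => rfl
  | cons σ T ih =>
    simp only [List.map_cons, List.mem_cons, not_or] at h
    change DD σ (DL T (DD τ f)) = DD τ (DD σ (DL T f))
    rw [ih h.2, DD_comm _ _ (Ne.symm h.1)]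

lemma upd_mem {N : ℕ} {I : Fin N → Set ℝ} {x : Fin N → ℝ} (hx : ∀ i, x i ∈ I i)
    {j : Fin N} {t : ℝ} (ht : t ∈ I j) : ∀ i, Function.update x j t i ∈ I i := by
  intro i
  by_cases h : i = j
  · subst h; simpa using ht
  · simpa [Function.update_of_ne h] using hx i

lemma DL_hasDeriv {N : ℕ} (I : Fin N → Set ℝ) (j : Fin N) (g g' : (Fin N → ℝ) → ℂ)
    (hg : ∀ x, (∀ i, x i ∈ I i) →
      HasDerivAt (fun t => g (Function.update x j t)) (g' x) (x j))
    (T : List (Fin N × ℝ × ℝ)) (hT : ∀ τ ∈ T, τ.2.1 ∈ I τ.1 ∧ τ.2.2 ∈ I τ.1)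
    (hj : j ∉ T.map Prod.fst) :
    ∀ x, (∀ i, x i ∈ I i) →
      HasDerivAt (fun t => DL T g (Function.update x j t)) (DL T g' x) (x j) := by
  induction T with
  | nil => exact hg
  | cons σ T ih =>
    simp only [List.map_cons, List.mem_cons, not_or] at hj
    intro x hx
    have hσ := hT σ (by simp)
    have ih' := ih (fun τ h => hT τ (by simp [h])) hj.2
    have h1 := ih' _ (upd_mem hx hσ.2)
    have h2 := ih' _ (upd_mem hx hσ.1)
    rw [Function.update_of_ne hj.1] at h1 h2
    have h3 := h1.sub h2
    change HasDerivAt (fun t => DD σ (DL T g) (Function.update x j t)) (DD σ (DL T g') x) (x j)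
    refine h3.congr_of_eventuallyEq (Filter.Eventually.of_forall fun t => ?_)
    simp only [DD, Pi.sub_apply]
    rw [Function.update_comm hj.1, Function.update_comm hj.1]

lemma step1 {N : ℕ} (I : Fin N → Set ℝ) (hI : ∀ i, Convex ℝ (I i)) (j : Fin N)
    (g : (Fin N → ℝ) → ℂ)
    (hg : ∀ x, (∀ i, x i ∈ I i) →
      DifferentiableAt ℝ (fun t => g (Function.update x j t)) (x j))
    (T : List (Fin N × ℝ × ℝ)) (hT : ∀ τ ∈ T, τ.2.1 ∈ I τ.1 ∧ τ.2.2 ∈ I τ.1)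
    (hj : j ∉ T.map Prod.fst) (K : ℝ)
    (hK : ∀ x, (∀ i, x i ∈ I i) → ‖DL T (pderivCoord j g) x‖ ≤ K)
    (a b : ℝ) (ha : a ∈ I j) (hb : b ∈ I j) :
    ∀ x, (∀ i, x i ∈ I i) → ‖DL T (DD (j, a, b) g) x‖ ≤ K * |b - a| := by
  intro x hx
  rw [DL_DD_comm _ _ hj]
  have hd := DL_hasDeriv I j g (pderivCoord j g) (fun x hx => (hg x hx).hasDerivAt) T hT hj
  have := (hI j).norm_image_sub_le_of_norm_hasDerivWithin_le
    (f := fun t => DL T g (Function.update x j t))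
    (f' := fun t => DL T (pderivCoord j g) (Function.update x j t)) (C := K)
    (fun t ht => by
      have := hd _ (upd_mem hx ht)
      simp only [Function.update_idem, Function.update_self] at this
      exact this.hasDerivWithinAt)
    (fun t ht => hK _ (upd_mem hx ht)) ha hb
  simpa [DD, Real.norm_eq_abs] using this

lemma step2 {N : ℕ} (I : Fin N → Set ℝ) (j : Fin N) (hI : IsOpen (I j))
    (g : (Fin N → ℝ) → ℂ)
    (hg : ∀ x, (∀ i, x i ∈ I i) →
      DifferentiableAt ℝ (fun t => g (Function.update x j t)) (x j))
    (T : List (Fin N × ℝ × ℝ)) (hT : ∀ τ ∈ T, τ.2.1 ∈ I τ.1 ∧ τ.2.2 ∈ I τ.1)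
    (hj : j ∉ T.map Prod.fst) (K : ℝ) (hK0 : 0 ≤ K)
    (hK : ∀ a ∈ I j, ∀ b ∈ I j, ∀ x, (∀ i, x i ∈ I i) →
      ‖DD (j, a, b) (DL T g) x‖ ≤ K * |b - a|) :
    ∀ x, (∀ i, x i ∈ I i) → ‖DL T (pderivCoord j g) x‖ ≤ K := by
  intro x hx
  have hd := DL_hasDeriv I j g (pderivCoord j g) (fun x hx => (hg x hx).hasDerivAt) T hT hj x hx
  refine hd.le_of_lip' hK0 ?_
  filter_upwards [hI.mem_nhds (hx j)] with t ht
  simpa [DD, Real.norm_eq_abs] using hK (x j) (hx j) t ht x hx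

lemma sideProd_append {N : ℕ} (T T' : List (Fin N × ℝ × ℝ)) :
    sideProd (T ++ T') = sideProd T * sideProd T' := by
  simp [sideProd]

lemma sideProd_single {N : ℕ} (j : Fin N) (a b : ℝ) :
    sideProd [(j, a, b)] = |b - a| := by
  simp [sideProd]

lemma sideProd_nonneg {N : ℕ} (T : List (Fin N × ℝ × ℝ)) : 0 ≤ sideProd T := by
  unfold sideProd
  apply List.prod_nonneg
  intro y hy
  obtain ⟨τ, -, rfl⟩ := List.mem_map.1 hy
  exact abs_nonneg _

lemma boundA {N : ℕ} (I : Fin N → Set ℝ) (hI : ∀ i, Convex ℝ (I i))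
    (f : (Fin N → ℝ) → ℂ)
    (hf : ∀ L : List (Fin N), L.Pairwise (· < ·) → ∀ j, ∀ x, (∀ i, x i ∈ I i) →
      DifferentiableAt ℝ (fun t => PD L f (Function.update x j t)) (x j))
    (L : List (Fin N)) (hL : L.Pairwise (· < ·)) (M : ℝ)
    (hM : ∀ x, (∀ i, x i ∈ I i) → ‖PD L f x‖ ≤ M)
    (T : List (Fin N × ℝ × ℝ)) : ∀ (B : List (Fin N)), T.map Prod.fst ++ B = L →
    (∀ τ ∈ T, τ.2.1 ∈ I τ.1 ∧ τ.2.2 ∈ I τ.1) →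
    ∀ x, (∀ i, x i ∈ I i) → ‖DL T (PD B f) x‖ ≤ M * sideProd T := by
  induction T using List.reverseRecOn with
  | nil =>
    intro B hB _ x hx
    simp only [List.map_nil, List.nil_append] at hB
    subst hB
    simpa [DL, sideProd] using hM x hx
  | append_singleton T τ ih =>
    intro B hB hT x hx
    obtain ⟨j, a, b⟩ := τ
    have hB' : T.map Prod.fst ++ (j :: B) = L := by simpa using hB
    have hT' : ∀ τ ∈ T, τ.2.1 ∈ I τ.1 ∧ τ.2.2 ∈ I τ.1 := fun τ h => hT τ (by simp [h])
    have hab := hT (j, a, b) (by simp)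
    have h1 := ih (j :: B) hB' hT'
    have hL' := hL
    rw [← hB', List.pairwise_append] at hL'
    have hj : j ∉ T.map Prod.fst := fun h => lt_irrefl _ (hL'.2.2 j h j (by simp))
    rw [DL_append, sideProd_append, sideProd_single, ← mul_assoc]
    exact step1 I hI j (PD B f) (hf B (List.pairwise_cons.1 hL'.2.1).2 j) T hT' hj _ h1
      a b hab.1 hab.2 x hx

lemma boundB {N : ℕ} (I : Fin N → Set ℝ) (hI : ∀ i, Convex ℝ (I i))
    (f : (Fin N → ℝ) → ℂ)
    (hf : ∀ L : List (Fin N), L.Pairwise (· < ·) → ∀ j, ∀ x, (∀ i, x i ∈ I i) →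
      DifferentiableAt ℝ (fun t => PD L f (Function.update x j t)) (x j))
    (L1 : List (Fin N)) (T2 : List (Fin N × ℝ × ℝ))
    (hL : (L1 ++ T2.map Prod.fst).Pairwise (· < ·)) (hopen : ∀ j ∈ L1, IsOpen (I j)) (M : ℝ)
    (hM0 : 0 ≤ M)
    (hM : ∀ x, (∀ i, x i ∈ I i) → ‖PD (L1 ++ T2.map Prod.fst) f x‖ ≤ M)
    (hT2 : ∀ τ ∈ T2, τ.2.1 ∈ I τ.1 ∧ τ.2.2 ∈ I τ.1)
    (B : List (Fin N)) : ∀ (A : List (Fin N × ℝ × ℝ)), A.map Prod.fst ++ B = L1 →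
    (∀ τ ∈ A, τ.2.1 ∈ I τ.1 ∧ τ.2.2 ∈ I τ.1) →
    ∀ x, (∀ i, x i ∈ I i) → ‖DL (A ++ T2) (PD B f) x‖ ≤ M * sideProd (A ++ T2) := by
  induction B with
  | nil =>
    intro A hA hAI x hx
    simp only [List.append_nil] at hA
    refine boundA I hI f hf _ hL M hM (A ++ T2) [] (by simp [hA]) ?_ x hx
    intro τ hτ
    rcases List.mem_append.1 hτ with h | h
    · exact hAI τ h
    · exact hT2 τ h
  | cons j B ih =>
    intro A hA hAI
    have hAT : ∀ τ ∈ A ++ T2, τ.2.1 ∈ I τ.1 ∧ τ.2.2 ∈ I τ.1 := by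
      intro τ hτ
      rcases List.mem_append.1 hτ with h | h
      · exact hAI τ h
      · exact hT2 τ h
    have hjL : j ∈ L1 := by rw [← hA]; simp
    have hL' := hL
    rw [List.pairwise_append] at hL'
    have hL1 := hL'.1
    rw [← hA, List.pairwise_append] at hL1
    have hjA : j ∉ A.map Prod.fst := fun h => lt_irrefl _ (hL1.2.2 j h j (by simp))
    have hjT : j ∉ T2.map Prod.fst := fun h => lt_irrefl _ (hL'.2.2 j hjL j h)
    have hj : j ∉ (A ++ T2).map Prod.fst := by
      rw [List.map_append, List.mem_append]; tauto
    refine step2 I j (hopen j hjL) (PD B f) (hf B (List.pairwise_cons.1 hL1.2.1).2 j)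
      (A ++ T2) hAT hj _ (mul_nonneg hM0 (sideProd_nonneg _)) ?_
    intro a ha b hb x hx
    have h := ih (A ++ [(j, a, b)]) (by simpa using hA) (by
      intro τ hτ
      rcases List.mem_append.1 hτ with h | h
      · exact hAI τ h
      · rw [List.mem_singleton] at h; subst h; exact ⟨ha, hb⟩) x hx
    rw [DL_append, DL_append] at h
    change ‖DL A (DD (j, a, b) (DL T2 (PD B f))) x‖ ≤ _ at h
    rw [DL_DD_comm _ _ hjA, ← DL_append] at h
    rw [sideProd_append, sideProd_append, sideProd_single] at h
    rw [sideProd_append]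
    linarith [h]

lemma mpderiv_eq_PD {N : ℕ} (γ : Fin N → ℕ) (L : List (Fin N)) (hL : L.Pairwise (· < ·))
    (h : ∀ j, j ∈ L ↔ γ j = 1) (f : (Fin N → ℝ) → ℂ) : mpderiv γ f = PD L f := by
  have hfil : (List.finRange N).filter (fun j => decide (γ j = 1)) = L := by
    have hs : ((List.finRange N).filter (fun j => decide (γ j = 1))).Pairwise (· < ·) :=
      (List.pairwise_lt_finRange N).filter _
    refine List.Perm.eq_of_pairwise (le := (· < ·)) ?_ hs hL ?_
    · intro a b _ _ h1 h2; exact absurd h1 (lt_asymm h2)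
    · refine (List.perm_ext_iff_of_nodup (hs.imp ne_of_lt) (hL.imp ne_of_lt)).2 ?_
      intro a; simp [h]
  rw [← hfil, PD, List.foldr_filter]
  simp [mpderiv]

lemma append_update {n₁ n₂ : ℕ} (ξ : Fin n₁ → ℝ) (k : Fin n₂ → ℝ) (j : Fin n₂) (t : ℝ) :
    Fin.append ξ (Function.update k j t)
      = Function.update (Fin.append ξ k) (Fin.natAdd n₁ j) t := by
  funext i
  refine Fin.addCases (fun i => ?_) (fun i => ?_) i
  · have : Fin.castAdd n₂ i ≠ Fin.natAdd n₁ j := by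
      intro h
      have := congrArg Fin.val h
      simp at this
      omega
    rw [Function.update_of_ne this]; simp
  · by_cases h : i = j
    · subst h; simp
    · have : Fin.natAdd n₁ i ≠ Fin.natAdd n₁ j := by
        intro h'
        have := congrArg Fin.val h'
        simp at this
        omega
      rw [Function.update_of_ne this]; simp [Function.update_of_ne h]

lemma ddiff_eq_DL {n₁ n₂ : ℕ} (ξ : Fin n₁ → ℝ) (F : (Fin (n₁ + n₂) → ℝ) → ℂ)
    (k : Fin n₂ → ℤ) (L : List (Fin n₂)) (hL : L.Nodup) :
    ∀ k' : Fin n₂ → ℤ, (∀ j ∈ L, k' j = k j) →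
      L.foldr ddiffCoord (fun k' => F (Fin.append ξ (fun j => ((k' j : ℝ))))) k'
       = DL (L.map fun j => (Fin.natAdd n₁ j, (k j : ℝ) - 1, (k j : ℝ))) F
          (Fin.append ξ (fun j => ((k' j : ℝ)))) := by
  induction L with
  | nil => intro k' _; rfl
  | cons j L ih =>
    intro k' hk'
    rw [List.nodup_cons] at hL
    have ih' := ih hL.2
    have h1 := ih' k' (fun i hi => hk' i (by simp [hi]))
    have h2 := ih' (Function.update k' j (k' j - 1)) (fun i hi => by
      have hij : i ≠ j := by rintro rfl; exact hL.1 hi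
      rw [Function.update_of_ne hij]
      exact hk' i (by simp [hi]))
    have hj : k' j = k j := hk' j (by simp)
    simp only [List.foldr_cons, List.map_cons, ddiffCoord]
    rw [h1, h2]
    change _ = DL _ F (Function.update _ _ _) - DL _ F (Function.update _ _ _)
    simp only
    rw [← append_update, ← append_update]
    congr 3
    · congr 1
      funext i
      by_cases h : i = j
      · subst h; simp [hj]
      · simp [Function.update_of_ne h]
    · congr 1
      funext i
      by_cases h : i = j
      · subst h; simp [hj]
      · simp [Function.update_of_ne h]

/-- Mixed continuous/discrete Michlin-type estimate: if all multi-index derivatives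
`∂^γ κ(λ,·)` of order `γ ≤ (1,…,1)` satisfy `|ζ|^{|γ|} |∂^γ κ(λ,ζ)| ≤ C`, then the mixed
expressions `ξ^{γ₁} k^{γ₂} ∂_ξ^{γ₁} Δ_k^{γ₂} κ(λ,(ξ,k))` are uniformly bounded by a
constant `C'` depending only on `C` and the dimension, whenever `|k_j| ≥ 2` in every
discrete coordinate appearing in `γ₂`. -/
theorem mixed_michlin_estimate (n₁ n₂ : ℕ) (Λ : Type*)
    (κ : Λ → (Fin (n₁ + n₂) → ℝ) → ℂ) (C : ℝ) (hC : 0 < C)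
    (hsmooth : ∀ (lam : Λ) (γ : Fin (n₁ + n₂) → ℕ), (∀ j, γ j ≤ 1) →
      ∀ (j : Fin (n₁ + n₂)) (ζ : Fin (n₁ + n₂) → ℝ), ζ ≠ 0 →
        DifferentiableAt ℝ (fun t => mpderiv γ (κ lam) (Function.update ζ j t)) (ζ j))
    (hbd : ∀ (lam : Λ) (γ : Fin (n₁ + n₂) → ℕ), (∀ j, γ j ≤ 1) →
      ∀ ζ : Fin (n₁ + n₂) → ℝ, ζ ≠ 0 →
        ‖ζ‖ ^ (∑ j, γ j) * ‖mpderiv γ (κ lam) ζ‖ ≤ C) :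
    ∃ C' : ℝ, 0 < C' ∧
      ∀ (lam : Λ) (γ₁ : Fin n₁ → ℕ) (γ₂ : Fin n₂ → ℕ),
        (∀ j, γ₁ j ≤ 1) → (∀ j, γ₂ j ≤ 1) → γ₂ ≠ 0 →
        ∀ ξ : Fin n₁ → ℝ, ξ ≠ 0 →
        ∀ k : Fin n₂ → ℤ, (∀ j, γ₂ j ≠ 0 → 2 ≤ |k j|) →
          (∏ j, |ξ j| ^ γ₁ j) * (∏ j, |(k j : ℝ)| ^ γ₂ j) *
            ‖mddiff γ₂
              (fun k' => mpderiv (Fin.append γ₁ 0) (κ lam)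
                (Fin.append ξ (fun j => ((k' j : ℝ))))) k‖ ≤ C' := by
  refine ⟨2 ^ (n₁ + n₂) * C, by positivity, ?_⟩
  intro lam γ₁ γ₂ hγ₁ hγ₂ _ ξ hξ k hk
  set P : ℝ := (∏ j, |ξ j| ^ γ₁ j) * (∏ j, |(k j : ℝ)| ^ γ₂ j) with hP
  have hP0 : 0 ≤ P := by positivity
  rcases hP0.eq_or_lt with hPz | hPpos
  · rw [← hPz, zero_mul]; positivity
  have hξ0 : 0 < ‖ξ‖ := norm_pos_iff.2 hξ
  -- the box
  set I : Fin (n₁ + n₂) → Set ℝ := Fin.append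
    (fun j => Set.Ioo (ξ j - ‖ξ‖ / 2) (ξ j + ‖ξ‖ / 2))
    (fun j => Set.Icc ((k j : ℝ) - 1) (k j : ℝ)) with hIdef
  have hI : ∀ i, Convex ℝ (I i) := by
    intro i
    refine Fin.addCases (fun i => ?_) (fun i => ?_) i
    · simpa [hIdef] using convex_Ioo _ _
    · simpa [hIdef] using convex_Icc _ _
  have hnorm : ∀ x : Fin (n₁ + n₂) → ℝ, (∀ i, x i ∈ I i) → ‖ξ‖ ≤ 2 * ‖x‖ := by
    intro x hx
    have : ‖ξ‖ ≤ ‖x‖ + ‖ξ‖ / 2 := by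
      refine (pi_norm_le_iff_of_nonneg (by positivity)).2 ?_
      intro j
      have h1 := hx (Fin.castAdd n₂ j)
      simp only [hIdef, Fin.append_left, Set.mem_Ioo] at h1
      have h2 := norm_le_pi_norm x (Fin.castAdd n₂ j)
      rw [Real.norm_eq_abs] at h2 ⊢
      rw [abs_le] at h2 ⊢
      constructor <;> linarith
    linarith
  have hne : ∀ x : Fin (n₁ + n₂) → ℝ, (∀ i, x i ∈ I i) → x ≠ 0 := by
    intro x hx h0
    have := hnorm x hx
    rw [h0, norm_zero] at this
    linarith
  have hPle : ∀ x : Fin (n₁ + n₂) → ℝ, (∀ i, x i ∈ I i) →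
      P ≤ (2 * ‖x‖) ^ (∑ j, Fin.append γ₁ γ₂ j) := by
    intro x hx
    rw [Fin.sum_univ_add, pow_add]
    simp only [Fin.append_left, Fin.append_right]
    rw [← Finset.prod_pow_eq_pow_sum, ← Finset.prod_pow_eq_pow_sum, hP]
    refine mul_le_mul ?_ ?_ (by positivity) (by positivity)
    · refine Finset.prod_le_prod (fun _ _ => by positivity) (fun j _ => ?_)
      refine pow_le_pow_left₀ (abs_nonneg _) ?_ _
      exact (norm_le_pi_norm ξ j).trans (hnorm x hx)
    · refine Finset.prod_le_prod (fun _ _ => by positivity) (fun j _ => ?_)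
      by_cases h0 : γ₂ j = 0
      · simp [h0]
      refine pow_le_pow_left₀ (abs_nonneg _) ?_ _
      have h2 : (2 : ℝ) ≤ |(k j : ℝ)| := by exact_mod_cast hk j h0
      have h1 := hx (Fin.natAdd n₁ j)
      simp only [hIdef, Fin.append_right, Set.mem_Icc] at h1
      have h3 := norm_le_pi_norm x (Fin.natAdd n₁ j)
      rw [Real.norm_eq_abs, abs_le] at h3
      rcases abs_cases (k j : ℝ) with ⟨h, _⟩ | ⟨h, _⟩ <;> rw [h] at h2 ⊢ <;> linarith
  set L1 : List (Fin n₁) := (List.finRange n₁).filter (fun j => decide (γ₁ j = 1)) with hL1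
  set L2 : List (Fin n₂) := (List.finRange n₂).filter (fun j => decide (γ₂ j = 1)) with hL2
  have hs1 : L1.Pairwise (· < ·) := (List.pairwise_lt_finRange _).filter _
  have hs2 : L2.Pairwise (· < ·) := (List.pairwise_lt_finRange _).filter _
  set T2 : List (Fin (n₁ + n₂) × ℝ × ℝ) :=
    L2.map fun j => (Fin.natAdd n₁ j, (k j : ℝ) - 1, (k j : ℝ)) with hT2
  have hT2fst : T2.map Prod.fst = L2.map (Fin.natAdd n₁) := by
    simp [hT2, Function.comp_def]
  have hsA : (L1.map (Fin.castAdd n₂)).Pairwise (· < ·) := by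
    rw [List.pairwise_map]; exact hs1.imp (fun h => Fin.lt_def.2 (Fin.lt_def.1 h))
  have hsB : (L2.map (Fin.natAdd n₁)).Pairwise (· < ·) := by
    rw [List.pairwise_map]; exact hs2.imp (fun h => by simpa using h)
  have hsAB : (L1.map (Fin.castAdd n₂) ++ T2.map Prod.fst).Pairwise (· < ·) := by
    rw [hT2fst, List.pairwise_append]
    refine ⟨hsA, hsB, ?_⟩
    intro a ha b hb
    obtain ⟨i, _, rfl⟩ := List.mem_map.1 ha
    obtain ⟨j, _, rfl⟩ := List.mem_map.1 hb
    rw [Fin.lt_def]; simp; omega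
  have hcn : ∀ (i : Fin n₁) (j : Fin n₂), Fin.castAdd n₂ i ≠ Fin.natAdd n₁ j := by
    intro i j h
    have := congrArg Fin.val h
    simp at this
    omega
  have hF : mpderiv (Fin.append γ₁ 0) (κ lam) = PD (L1.map (Fin.castAdd n₂)) (κ lam) := by
    refine mpderiv_eq_PD _ _ hsA ?_ _
    intro j
    refine Fin.addCases (fun i => ?_) (fun i => ?_) j
    · simp [hL1]
    · simp [hcn]
  have hF2 : mpderiv (Fin.append γ₁ γ₂) (κ lam)
      = PD (L1.map (Fin.castAdd n₂) ++ T2.map Prod.fst) (κ lam) := by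
    refine mpderiv_eq_PD _ _ hsAB ?_ _
    intro j
    rw [hT2fst]
    refine Fin.addCases (fun i => ?_) (fun i => ?_) j
    · simp [hL1, (fun a b => (hcn a b).symm)]
    · simp [hL2, hcn]
  have hγ : ∀ j, Fin.append γ₁ γ₂ j ≤ 1 := by
    intro j
    refine Fin.addCases (fun i => ?_) (fun i => ?_) j
    · simpa using hγ₁ i
    · simpa using hγ₂ i
  have hf : ∀ L : List (Fin (n₁ + n₂)), L.Pairwise (· < ·) → ∀ j, ∀ x, (∀ i, x i ∈ I i) →
      DifferentiableAt ℝ (fun t => PD L (κ lam) (Function.update x j t)) (x j) := by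
    intro L hL j x hx
    have := hsmooth lam (fun i => if i ∈ L then 1 else 0)
      (fun i => by split_ifs <;> simp) j x (hne x hx)
    rwa [mpderiv_eq_PD _ L hL (fun i => by simp)] at this
  have hM : ∀ x, (∀ i, x i ∈ I i) →
      ‖PD (L1.map (Fin.castAdd n₂) ++ T2.map Prod.fst) (κ lam) x‖
        ≤ 2 ^ (n₁ + n₂) * C / P := by
    intro x hx
    rw [← hF2, le_div_iff₀ hPpos]
    have h1 := hbd lam _ hγ x (hne x hx)
    have h2 := hPle x hx
    rw [mul_pow] at h2
    have h3 : (∑ j, Fin.append γ₁ γ₂ j) ≤ n₁ + n₂ := by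
      calc (∑ j, Fin.append γ₁ γ₂ j) ≤ ∑ j : Fin (n₁ + n₂), 1 :=
            Finset.sum_le_sum (fun j _ => hγ j)
        _ = n₁ + n₂ := by simp
    have h4 : (2 : ℝ) ^ (∑ j, Fin.append γ₁ γ₂ j) ≤ 2 ^ (n₁ + n₂) :=
      pow_le_pow_right₀ (by norm_num) h3
    calc ‖mpderiv (Fin.append γ₁ γ₂) (κ lam) x‖ * P
        ≤ ‖mpderiv (Fin.append γ₁ γ₂) (κ lam) x‖ *
          (2 ^ (∑ j, Fin.append γ₁ γ₂ j) * ‖x‖ ^ (∑ j, Fin.append γ₁ γ₂ j)) := by gcongr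
      _ = 2 ^ (∑ j, Fin.append γ₁ γ₂ j) * (‖x‖ ^ (∑ j, Fin.append γ₁ γ₂ j) *
          ‖mpderiv (Fin.append γ₁ γ₂) (κ lam) x‖) := by ring
      _ ≤ 2 ^ (n₁ + n₂) * C := by gcongr
  have hx0 : ∀ i, Fin.append ξ (fun j => ((k j : ℝ))) i ∈ I i := by
    intro i
    refine Fin.addCases (fun i => ?_) (fun i => ?_) i
    · simp [hIdef, hξ]
    · simp [hIdef]
  have key := boundB I hI (κ lam) hf (L1.map (Fin.castAdd n₂)) T2 hsAB (by
      intro j hj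
      obtain ⟨i, _, rfl⟩ := List.mem_map.1 hj
      simpa [hIdef] using isOpen_Ioo) _ (by positivity) hM (by
      intro τ hτ
      obtain ⟨i, _, rfl⟩ := List.mem_map.1 hτ
      simp [hIdef]) (L1.map (Fin.castAdd n₂)) [] (by simp) (by simp) _ hx0
  have hside : sideProd T2 = 1 := by
    simp [sideProd, hT2, Function.comp_def]
  rw [List.nil_append, hside, mul_one, ← hF] at key
  have hmd : mddiff γ₂ (fun k' => mpderiv (Fin.append γ₁ 0) (κ lam)
        (Fin.append ξ (fun j => ((k' j : ℝ))))) k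
      = DL T2 (mpderiv (Fin.append γ₁ 0) (κ lam)) (Fin.append ξ (fun j => ((k j : ℝ)))) := by
    rw [hT2, ← ddiff_eq_DL ξ _ k L2 (hs2.imp ne_of_lt) k (fun _ _ => rfl), hL2,
      List.foldr_filter]
    simp [mddiff]
  rw [hmd]
  rw [le_div_iff₀ hPpos] at key
  linarith
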